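/- arXiv:2212.07520 — 2 statements merged into one kernel-verified Lean document; each statement's English description precedes it below -/
import Mathlib

section
/- There exists a linear map ε : C^∞_0(B̄_1, ℂ) → S_0(ℝ^m) such that for each f ∈ C^∞_0(B̄_1, ℂ): (i) ε(f) restricted to B̄_1 equals f; (ii) ε(f) has compact support; and (iii) for all n, k ∈ ℕ, ⟨ε(f)⟩_{n,k} ≤ C · ⟨f⟩_{n,k,1} with constants C = C(n,k) > 0. -/
open Metric Set

/-- Membership in `C^∞₀(B̄_1, ℂ)`: smooth on the closed unit ball and flat at the
origin. -/
def FlatSmoothOnBall (m : ℕ) (f : EuclideanSpace ℝ (Fin m) → ℂ) : Prop :=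
  ContDiffOn ℝ (⊤ : ℕ∞) f (closedBall 0 1) ∧
    ∀ i : ℕ, iteratedFDerivWithin ℝ i f (closedBall 0 1) 0 = 0

/-- The weighted norm `⟨f⟩_{n,k,1}` on flat functions on the closed unit ball. -/
noncomputable def flatBallNorm (m : ℕ) (n k : ℕ)
    (f : EuclideanSpace ℝ (Fin m) → ℂ) : ℝ :=
  ⨆ p : (closedBall (0 : EuclideanSpace ℝ (Fin m)) 1 \ {0} :
      Set (EuclideanSpace ℝ (Fin m))) × Fin (n + 1),
    ‖(p.1 : EuclideanSpace ℝ (Fin m))‖ ^ (-(k : ℤ)) *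
      ‖iteratedFDerivWithin ℝ p.2 f (closedBall 0 1) p.1‖

/-- The norm `⟨g⟩_{n,k} = sup_{x ≠ 0} max_{|a| ≤ n, l ≤ k} |x|^{-l} |D^a g(x)|` on
Schwartz functions flat at the origin. -/
noncomputable def flatGlobalNorm (m : ℕ) (n k : ℕ)
    (f : EuclideanSpace ℝ (Fin m) → ℂ) : ℝ :=
  ⨆ p : ({x : EuclideanSpace ℝ (Fin m) | x ≠ 0} :
      Set (EuclideanSpace ℝ (Fin m))) × Fin (n + 1) × Fin (k + 1),
    ‖(p.1 : EuclideanSpace ℝ (Fin m))‖ ^ (-((p.2.2 : ℕ) : ℤ)) *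
      ‖iteratedFDeriv ℝ p.2.1 f p.1‖

/-!
Seeley's extension across the unit sphere. The maps `x ↦ exp (-2ʲ * (‖x‖² - 1)) • x` fix the sphere
and push the exterior of the ball into the ball, and outside the ball the extension is the series
`∑ⱼ aⱼ f (exp (-2ʲ * (‖x‖² - 1)) • x)`. Each differentiation multiplies summands by `1` or by `2ʲ`,
up to factors independent of `j` or equal to `1` on the sphere, so all derivatives match those of
`f` there once the rapidly decreasing weights satisfy `∑ⱼ aⱼ 2 ^ (j * p) = δ_{p0}` for all `p`. Such
series form a class closed under differentiation, which reduces smoothness and the estimates in `Cⁿ`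
to continuity and to sup-norm bounds of the members of the class. A cutoff makes the support
compact. Nothing changes on the ball, and outside of it the weights `|x|⁻ˡ` are at most `1`, so the
weighted estimate follows from the one in `Cⁿ`.
-/

open Topology

universe u

namespace Seeley

/-- The unnormalised Seeley weights: the Taylor coefficients of the entire function with
`genFun 0 = 1` and `genFun (2 * z) = (1 - z) * genFun z`. -/
noncomputable def weight : ℕ → ℝ
  | 0 => 1
  | j + 1 => -weight j / (2 ^ (j + 1) - 1)

/-- The generating function `∑ⱼ weight j * zʲ` of the weights. Its zeros at the powers
`2, 4, 8, …` are the vanishing moments of the normalised weights. -/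
noncomputable def genFun (z : ℝ) : ℝ := ∑' j, weight j * z ^ j

/-- The `j`-th summand `aⱼ * 2 ^ (j * p)` of the `p`-th moment of the normalised Seeley
weights `aⱼ = weight j / genFun 1`. -/
noncomputable def coeff (p j : ℕ) : ℝ := weight j / genFun 1 * (2 ^ j) ^ p

lemma two_pow_le_two_pow_succ_sub_one (j : ℕ) : (2 : ℝ) ^ j ≤ 2 ^ (j + 1) - 1 := by
  have : (1 : ℝ) ≤ 2 ^ j := one_le_pow₀ one_le_two
  rw [pow_succ]
  linarith

lemma two_pow_succ_sub_one_pos (j : ℕ) : (0 : ℝ) < 2 ^ (j + 1) - 1 :=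
  (pow_pos two_pos j).trans_le (two_pow_le_two_pow_succ_sub_one j)

lemma abs_weight_succ (j : ℕ) : |weight (j + 1)| = |weight j| / (2 ^ (j + 1) - 1) := by
  rw [weight, abs_div, abs_neg, abs_of_pos (two_pow_succ_sub_one_pos j)]

lemma abs_weight_le_one (j : ℕ) : |weight j| ≤ 1 := by
  induction j with
  | zero => simp [weight]
  | succ j ih =>
    rw [abs_weight_succ, div_le_one (two_pow_succ_sub_one_pos j)]
    exact (ih.trans (one_le_pow₀ one_le_two)).trans (two_pow_le_two_pow_succ_sub_one j)

lemma two_pow_mul_weight_succ (j : ℕ) :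
    2 ^ (j + 1) * weight (j + 1) = weight (j + 1) - weight j := by
  have := (two_pow_succ_sub_one_pos j).ne'
  rw [weight]
  field_simp
  ring

lemma summable_weight_mul_pow (z : ℝ) : Summable fun j ↦ weight j * z ^ j := by
  refine summable_of_ratio_norm_eventually_le (r := 1 / 2) (by norm_num) ?_
  filter_upwards [(tendsto_pow_atTop_atTop_of_one_lt (one_lt_two (α := ℝ))).eventually_ge_atTop
    (2 * |z|)] with j hj
  have hratio : |z| / (2 ^ (j + 1) - 1) ≤ 1 / 2 := by
    rw [div_le_iff₀ (two_pow_succ_sub_one_pos j)]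
    linarith [two_pow_le_two_pow_succ_sub_one j]
  calc ‖weight (j + 1) * z ^ (j + 1)‖
      = |z| / (2 ^ (j + 1) - 1) * ‖weight j * z ^ j‖ := by
        simp only [norm_mul, norm_pow, Real.norm_eq_abs, abs_weight_succ]
        ring
    _ ≤ 1 / 2 * ‖weight j * z ^ j‖ := by gcongr

lemma genFun_two_mul (z : ℝ) : genFun (2 * z) = (1 - z) * genFun z := by
  have hz := summable_weight_mul_pow z
  have hz' : Summable fun j ↦ weight (j + 1) * z ^ (j + 1) := (summable_nat_add_iff 1).mpr hz
  have hterm (j : ℕ) : weight (j + 1) * (2 * z) ^ (j + 1) =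
      weight (j + 1) * z ^ (j + 1) - z * (weight j * z ^ j) := by
    linear_combination z ^ (j + 1) * two_pow_mul_weight_succ j
  calc genFun (2 * z)
      = weight 0 + ∑' j, weight (j + 1) * (2 * z) ^ (j + 1) := by
        simp [genFun, (summable_weight_mul_pow (2 * z)).tsum_eq_zero_add]
    _ = weight 0 + ∑' j, weight (j + 1) * z ^ (j + 1) - z * genFun z := by
        simp only [hterm]
        rw [hz'.tsum_sub (hz.mul_left z), tsum_mul_left, genFun, add_sub_assoc]
    _ = genFun z - z * genFun z := by
        simp [genFun, hz.tsum_eq_zero_add]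
    _ = (1 - z) * genFun z := by ring

lemma abs_genFun_sub_one_le {z : ℝ} (hz₀ : 0 ≤ z) (hz₁ : z < 1) :
    |genFun z - 1| ≤ z / (1 - z) := by
  have hgeom : HasSum (fun j : ℕ ↦ z * z ^ j) (z / (1 - z)) :=
    (hasSum_geometric_of_lt_one hz₀ hz₁).mul_left z
  have htail : genFun z - 1 = ∑' j, weight (j + 1) * z ^ (j + 1) := by
    simp [genFun, (summable_weight_mul_pow z).tsum_eq_zero_add, weight]
  rw [htail, ← Real.norm_eq_abs]
  refine tsum_of_norm_bounded hgeom fun j ↦ ?_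
  rw [norm_mul, Real.norm_eq_abs, Real.norm_of_nonneg (pow_nonneg hz₀ _), ← pow_succ']
  exact mul_le_of_le_one_left (pow_nonneg hz₀ _) (abs_weight_le_one _)

lemma genFun_one_ne_zero : genFun 1 ≠ 0 := by
  have hone : genFun 1 = 3 / 8 * genFun (1 / 4) := by
    have h₁ := genFun_two_mul (1 / 2)
    have h₂ := genFun_two_mul (1 / 4)
    norm_num at h₁ h₂ ⊢
    linarith
  have hquarter := abs_genFun_sub_one_le (z := 1 / 4) (by norm_num) (by norm_num)
  norm_num [abs_le] at hquarter
  rw [hone]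
  norm_num
  linarith

lemma genFun_two_pow_succ (p : ℕ) : genFun (2 ^ (p + 1)) = 0 := by
  induction p with
  | zero => simpa using genFun_two_mul 1
  | succ p ih => rw [pow_succ', genFun_two_mul, ih, mul_zero]

lemma coeff_eq (p j : ℕ) : coeff p j = weight j * (2 ^ p) ^ j / genFun 1 := by
  rw [coeff, pow_right_comm]
  ring

lemma coeff_succ (p j : ℕ) : coeff (p + 1) j = coeff p j * 2 ^ j := by
  rw [coeff, coeff, pow_succ, mul_assoc]

lemma summable_coeff (p : ℕ) : Summable (coeff p) := by
  simpa only [← coeff_eq] using (summable_weight_mul_pow (2 ^ p)).div_const (genFun 1)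

lemma tsum_coeff (p : ℕ) : ∑' j, coeff p j = if p = 0 then 1 else 0 := by
  have hsum : ∑' j, coeff p j = genFun (2 ^ p) / genFun 1 := by
    simp only [coeff_eq, tsum_div_const, genFun]
  cases p with
  | zero => simpa [hsum] using div_self genFun_one_ne_zero
  | succ p => simp [hsum, genFun_two_pow_succ]

end Seeley

section LineIntegral

variable {E F : Type*} [NormedAddCommGroup E] [NormedSpace ℝ E]
  [NormedAddCommGroup F] [NormedSpace ℝ F] [CompleteSpace F]

lemma sub_eq_integral_of_hasFDerivAt_off_countable {f : E → F} {f' : E → E →L[ℝ] F} {Z : Set E}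
    {x v : E} (hf : Continuous f) (hf' : Continuous f')
    (hZ : {t : ℝ | x + t • v ∈ Z}.Countable) (hderiv : ∀ y ∉ Z, HasFDerivAt f (f' y) y) :
    f (x + v) - f x = ∫ t in (0 : ℝ)..1, f' (x + t • v) v := by
  have hline : Continuous fun t : ℝ ↦ x + t • v := by fun_prop
  have hlineDeriv (t : ℝ) : HasDerivAt (fun t : ℝ ↦ x + t • v) v t := by
    simpa using ((hasDerivAt_id t).smul_const v).const_add x
  have hftc := MeasureTheory.integral_eq_of_hasDerivAt_off_countable
    (fun t : ℝ ↦ f (x + t • v)) (fun t ↦ f' (x + t • v) v) (a := 0) (b := 1) hZ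
    (hf.comp hline).continuousOn
    (fun t ht ↦ (hderiv _ ht.2).comp_hasDerivAt t (hlineDeriv t))
    (((hf'.comp hline).clm_apply continuous_const).intervalIntegrable _ _)
  simpa using hftc.symm

lemma hasFDerivAt_of_hasFDerivAt_off_countable {f : E → F} {f' : E → E →L[ℝ] F} {Z : Set E}
    {x : E} (hf : Continuous f) (hf' : Continuous f')
    (hZ : ∀ v ≠ 0, {t : ℝ | x + t • v ∈ Z}.Countable)
    (hderiv : ∀ y ∉ Z, HasFDerivAt f (f' y) y) : HasFDerivAt f (f' x) x := by
  rw [hasFDerivAt_iff_isLittleO_nhds_zero, Asymptotics.isLittleO_iff]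
  intro c hc
  obtain ⟨r, hr, hclose⟩ := Metric.continuous_iff.mp hf' x c hc
  filter_upwards [ball_mem_nhds (0 : E) hr] with v hv
  rcases eq_or_ne v 0 with rfl | hv₀
  · simp
  have hint : IntervalIntegrable (fun t : ℝ ↦ f' (x + t • v) v) MeasureTheory.volume 0 1 :=
    Continuous.intervalIntegrable (by fun_prop) _ _
  have hremainder : f (x + v) - f x - f' x v = ∫ t in (0 : ℝ)..1, (f' (x + t • v) - f' x) v := by
    rw [sub_eq_integral_of_hasFDerivAt_off_countable hf hf' (hZ v hv₀) hderiv]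
    simp [intervalIntegral.integral_sub hint intervalIntegrable_const]
  have hbound : ∀ t ∈ uIoc (0 : ℝ) 1, ‖(f' (x + t • v) - f' x) v‖ ≤ c * ‖v‖ := by
    intro t ht
    rw [uIoc_of_le zero_le_one] at ht
    refine ContinuousLinearMap.le_of_opNorm_le _ ?_ v
    rw [← dist_eq_norm]
    refine (hclose _ ?_).le
    rw [dist_eq_norm, add_sub_cancel_left, norm_smul, Real.norm_of_nonneg ht.1.le]
    exact (mul_le_of_le_one_left (norm_nonneg v) ht.2).trans_lt (mem_ball_zero_iff.mp hv)
  simpa [hremainder] using intervalIntegral.norm_integral_le_of_norm_le_const hbound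

end LineIntegral

lemma finite_line_inter_sphere {E : Type*} [NormedAddCommGroup E] [InnerProductSpace ℝ E]
    (c x : E) (r : ℝ) {v : E} (hv : v ≠ 0) : {t : ℝ | x + t • v ∈ sphere c r}.Finite := by
  let P : Polynomial ℝ := .C (‖v‖ ^ 2) * .X ^ 2 + .C (2 * inner ℝ (x - c) v) * .X +
    .C (‖x - c‖ ^ 2 - r ^ 2)
  have hv' : ‖v‖ ^ 2 ≠ 0 := pow_ne_zero 2 (norm_ne_zero_iff.mpr hv)
  have hP : P ≠ 0 := by
    rw [← Polynomial.leadingCoeff_ne_zero, Polynomial.leadingCoeff_quadratic hv']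
    exact hv'
  refine (Polynomial.finite_setOfPred_isRoot hP).subset fun t ht ↦ ?_
  have hnorm : ‖(x - c) + t • v‖ = r := by
    rw [← mem_sphere_iff_norm.mp ht]
    congr 1
    abel
  have hsq := norm_add_sq_real (x - c) (t • v)
  rw [hnorm, norm_smul, inner_smul_right, mul_pow, Real.norm_eq_abs, sq_abs] at hsq
  simp only [mem_ofPred_eq, Polynomial.IsRoot.def, P, Polynomial.eval_add, Polynomial.eval_mul,
    Polynomial.eval_pow, Polynomial.eval_X, Polynomial.eval_C]
  linarith

lemma uniqueDiffOn_closedBall {E : Type*} [NormedAddCommGroup E] [NormedSpace ℝ E] (c : E) {r : ℝ}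
    (hr : 0 < r) : UniqueDiffOn ℝ (closedBall c r) :=
  uniqueDiffOn_convex (convex_closedBall c r)
    ⟨c, mem_interior_iff_mem_nhds.mpr (closedBall_mem_nhds c hr)⟩

lemma exists_norm_iteratedFDerivWithin_le_mul_pow {E F : Type*} [NormedAddCommGroup E]
    [NormedSpace ℝ E] [NormedAddCommGroup F] [NormedSpace ℝ F] {s : Set E} {x₀ : E} {f : E → F}
    (hs : IsCompact s) (hconv : Convex ℝ s) (huniq : UniqueDiffOn ℝ s) (hx₀ : x₀ ∈ s)
    (hf : ContDiffOn ℝ (⊤ : ℕ∞) f s) (hflat : ∀ i, iteratedFDerivWithin ℝ i f s x₀ = 0)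
    (i k : ℕ) : ∃ C, ∀ x ∈ s, ‖iteratedFDerivWithin ℝ i f s x‖ ≤ C * ‖x - x₀‖ ^ k := by
  induction k generalizing i with
  | zero =>
    simpa using hs.exists_bound_of_continuousOn
      (hf.continuousOn_iteratedFDerivWithin (mod_cast le_top) huniq)
  | succ k ih =>
    obtain ⟨C, hC⟩ := ih (i + 1)
    refine ⟨|C|, fun x hx ↦ ?_⟩
    have hsegment : segment ℝ x₀ x ⊆ s := hconv.segment_subset hx₀ hx
    have hderiv : ∀ y ∈ segment ℝ x₀ x,
        ‖fderivWithin ℝ (iteratedFDerivWithin ℝ i f s) s y‖ ≤ |C| * ‖x - x₀‖ ^ k := by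
      intro y hy
      rw [norm_fderivWithin_iteratedFDerivWithin]
      refine (hC y (hsegment hy)).trans ?_
      gcongr
      · exact le_abs_self C
      · exact norm_sub_le_of_mem_segment hy
    have hdiff := hf.differentiableOn_iteratedFDerivWithin (m := i) (mod_cast WithTop.coe_lt_top i)
      huniq
    have hmvt := Convex.norm_image_sub_le_of_norm_hasFDerivWithin_le
      (fun y hy ↦ (hdiff y (hsegment hy)).hasFDerivWithinAt.mono hsegment) hderiv
      (convex_segment x₀ x) (left_mem_segment ℝ x₀ x) (right_mem_segment ℝ x₀ x)
    rwa [hflat, sub_zero, mul_assoc, ← pow_succ] at hmvt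

/-- All derivatives of `f` within `s` up to order `n` are bounded by `M`; this is the estimate
`‖f‖_{Cⁿ(s)} ≤ M`. Stating it as a predicate avoids the junk value of an unbounded supremum. -/
def DerivBoundOn {E F : Type*} [NormedAddCommGroup E] [NormedSpace ℝ E] [NormedAddCommGroup F]
    [NormedSpace ℝ F] (n : ℕ) (f : E → F) (s : Set E) (M : ℝ) : Prop :=
  ∀ j ≤ n, ∀ x ∈ s, ‖iteratedFDerivWithin ℝ j f s x‖ ≤ M

namespace DerivBoundOn

variable {E F G H : Type*} [NormedAddCommGroup E] [NormedSpace ℝ E] [NormedAddCommGroup F]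
  [NormedSpace ℝ F] [NormedAddCommGroup G] [NormedSpace ℝ G] [NormedAddCommGroup H]
  [NormedSpace ℝ H] {n : ℕ} {s : Set E} {f g : E → F} {M N : ℝ}

lemma norm_le (h : DerivBoundOn n f s M) {x : E} (hx : x ∈ s) : ‖f x‖ ≤ M := by
  simpa using h 0 n.zero_le x hx

lemma nonneg (h : DerivBoundOn n f s M) (hs : s.Nonempty) : 0 ≤ M :=
  (norm_nonneg _).trans (h.norm_le hs.choose_spec)

lemma of_le {k : ℕ} (h : DerivBoundOn n f s M) (hk : k ≤ n) : DerivBoundOn k f s M :=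
  fun j hj ↦ h j (hj.trans hk)

lemma mono (h : DerivBoundOn n f s M) (hMN : M ≤ N) : DerivBoundOn n f s N :=
  fun j hj x hx ↦ (h j hj x hx).trans hMN

lemma congr (h : DerivBoundOn n f s M) (hfg : EqOn g f s) : DerivBoundOn n g s M := by
  intro j hj x hx
  rw [iteratedFDerivWithin_congr hfg hx]
  exact h j hj x hx

lemma zero_iff : DerivBoundOn 0 f s M ↔ ∀ x ∈ s, ‖f x‖ ≤ M := by
  simp [DerivBoundOn]

lemma succ_iff (hs : UniqueDiffOn ℝ s) : DerivBoundOn (n + 1) f s M ↔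
    (∀ x ∈ s, ‖f x‖ ≤ M) ∧ DerivBoundOn n (fderivWithin ℝ f s) s M := by
  refine ⟨fun h ↦ ⟨fun x hx ↦ h.norm_le hx, fun j hj x hx ↦ ?_⟩, fun h j hj x hx ↦ ?_⟩
  · rw [norm_iteratedFDerivWithin_fderivWithin hs hx]
    exact h (j + 1) (by lia) x hx
  · cases j with
    | zero => simpa using h.1 x hx
    | succ j =>
      rw [← norm_iteratedFDerivWithin_fderivWithin hs hx]
      exact h.2 j (by lia) x hx

lemma add (hs : UniqueDiffOn ℝ s) (hf : ContDiffOn ℝ n f s) (hg : ContDiffOn ℝ n g s)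
    (hfM : DerivBoundOn n f s M) (hgN : DerivBoundOn n g s N) :
    DerivBoundOn n (fun x ↦ f x + g x) s (M + N) := by
  intro j hj x hx
  have hjn : (j : WithTop ℕ∞) ≤ n := mod_cast hj
  rw [fun_iteratedFDerivWithin_add_apply ((hf.of_le hjn) x hx) ((hg.of_le hjn) x hx) hs hx]
  exact (norm_add_le _ _).trans (add_le_add (hfM j hj x hx) (hgN j hj x hx))

lemma const_smul (hs : UniqueDiffOn ℝ s) (hf : ContDiffOn ℝ n f s) (hfM : DerivBoundOn n f s M)
    (c : ℝ) : DerivBoundOn n (fun x ↦ c • f x) s (|c| * M) := by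
  intro j hj x hx
  have hjn : (j : WithTop ℕ∞) ≤ n := mod_cast hj
  change ‖iteratedFDerivWithin ℝ j (c • f) s x‖ ≤ _
  rw [iteratedFDerivWithin_const_smul_apply ((hf.of_le hjn) x hx) hs hx, norm_smul,
    Real.norm_eq_abs]
  gcongr
  exact hfM j hj x hx

lemma bilinear (B : F →L[ℝ] G →L[ℝ] H) (hB : ‖B‖ ≤ 1) {g : E → G} (hs : UniqueDiffOn ℝ s)
    (hf : ContDiffOn ℝ n f s) (hg : ContDiffOn ℝ n g s) (hfM : DerivBoundOn n f s M)
    (hgN : DerivBoundOn n g s N) :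
    DerivBoundOn n (fun x ↦ B (f x) (g x)) s (2 ^ n * M * N) := by
  intro j hj x hx
  have hM : 0 ≤ M := hfM.nonneg ⟨x, hx⟩
  have hN : 0 ≤ N := hgN.nonneg ⟨x, hx⟩
  calc ‖iteratedFDerivWithin ℝ j (fun x ↦ B (f x) (g x)) s x‖
      ≤ ∑ i ∈ Finset.range (j + 1), (j.choose i : ℝ) * ‖iteratedFDerivWithin ℝ i f s x‖ *
          ‖iteratedFDerivWithin ℝ (j - i) g s x‖ :=
        B.norm_iteratedFDerivWithin_le_of_bilinear_of_le_one hf hg hs hx (mod_cast hj) hB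
    _ ≤ ∑ i ∈ Finset.range (j + 1), (j.choose i : ℝ) * M * N := by
        gcongr with i hi
        · exact hfM i (by grind) x hx
        · exact hgN _ (by lia) x hx
    _ = 2 ^ j * M * N := by
        rw [← Finset.sum_mul, ← Finset.sum_mul, ← Nat.cast_sum, Nat.sum_range_choose]
        norm_cast
    _ ≤ 2 ^ n * M * N := by gcongr; exact one_le_two

lemma smul {c : E → ℝ} (hs : UniqueDiffOn ℝ s) (hc : ContDiffOn ℝ n c s)
    (hf : ContDiffOn ℝ n f s) (hcM : DerivBoundOn n c s M) (hfN : DerivBoundOn n f s N) :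
    DerivBoundOn n (fun x ↦ c x • f x) s (2 ^ n * M * N) :=
  bilinear (.lsmul ℝ ℝ) ContinuousLinearMap.opNorm_lsmul_le hs hc hf hcM hfN

lemma clm_apply {L : E → F →L[ℝ] G} (hs : UniqueDiffOn ℝ s) (hL : ContDiffOn ℝ n L s)
    (hf : ContDiffOn ℝ n f s) (hLM : DerivBoundOn n L s M) (hfN : DerivBoundOn n f s N) :
    DerivBoundOn n (fun x ↦ L x (f x)) s (2 ^ n * M * N) :=
  bilinear (.id ℝ (F →L[ℝ] G)) ContinuousLinearMap.norm_id_le hs hL hf hLM hfN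

lemma smulRight {L : E → G →L[ℝ] ℝ} (hs : UniqueDiffOn ℝ s) (hL : ContDiffOn ℝ n L s)
    (hf : ContDiffOn ℝ n f s) (hLM : DerivBoundOn n L s M) (hfN : DerivBoundOn n f s N) :
    DerivBoundOn n (fun x ↦ (L x).smulRight (f x)) s (2 ^ n * M * N) :=
  bilinear (ContinuousLinearMap.smulRightL ℝ G F) ContinuousLinearMap.norm_smulRightL_le hs hL hf
    hLM hfN

end DerivBoundOn

lemma exists_derivBoundOn_of_isCompact {E F : Type*} [NormedAddCommGroup E] [NormedSpace ℝ E]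
    [NormedAddCommGroup F] [NormedSpace ℝ F] {n : ℕ} {f : E → F} {s : Set E}
    (hs : UniqueDiffOn ℝ s) (hcomp : IsCompact s) (hf : ContDiffOn ℝ n f s) :
    ∃ M, 0 ≤ M ∧ DerivBoundOn n f s M := by
  choose! K hK using fun j (hj : j ≤ n) ↦ hcomp.exists_bound_of_continuousOn
    (hf.continuousOn_iteratedFDerivWithin (mod_cast hj) hs)
  refine ⟨∑ j ∈ Finset.range (n + 1), |K j|, by positivity, fun j hj x hx ↦ ?_⟩
  calc ‖iteratedFDerivWithin ℝ j f s x‖ ≤ |K j| := (hK j hj x hx).trans (le_abs_self _)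
    _ ≤ ∑ j ∈ Finset.range (n + 1), |K j| :=
        Finset.single_le_sum (f := fun j ↦ |K j|) (fun _ _ ↦ abs_nonneg _) (by grind)

namespace Seeley

section Factor

variable {E : Type*} [NormedAddCommGroup E] {x : E}

/-- The radial factor `exp (-2ʲ * (‖x‖² - 1))`. It equals `1` on the unit sphere, and its logarithm
is `2ʲ` times a function independent of `j`, so that each differentiation produces a factor `2ʲ`. -/
noncomputable def factor (j : ℕ) (x : E) : ℝ := Real.exp (-(2 ^ j * (‖x‖ ^ 2 - 1)))

lemma factor_pos (j : ℕ) (x : E) : 0 < factor j x := Real.exp_pos _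

lemma factor_of_norm_eq_one (j : ℕ) (hx : ‖x‖ = 1) : factor j x = 1 := by
  simp [factor, hx]

lemma factor_mul_norm_sq_le_one (j : ℕ) (hx : 1 ≤ ‖x‖) : factor j x * ‖x‖ ^ 2 ≤ 1 := by
  have hr : 0 ≤ ‖x‖ ^ 2 - 1 := sub_nonneg.2 (one_le_pow₀ hx)
  have hj : (1 : ℝ) ≤ 2 ^ j := one_le_pow₀ one_le_two
  calc factor j x * ‖x‖ ^ 2
      ≤ Real.exp (-(‖x‖ ^ 2 - 1)) * Real.exp (‖x‖ ^ 2 - 1) := by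
        unfold factor
        gcongr
        · exact le_mul_of_one_le_left hr hj
        · linarith [Real.add_one_le_exp (‖x‖ ^ 2 - 1)]
    _ = 1 := by rw [← Real.exp_add, neg_add_cancel, Real.exp_zero]

lemma factor_le_one (j : ℕ) (hx : 1 ≤ ‖x‖) : factor j x ≤ 1 :=
  (le_mul_of_one_le_right (factor_pos j x).le (one_le_pow₀ hx)).trans
    (factor_mul_norm_sq_le_one j hx)

lemma continuous_factor (j : ℕ) : Continuous (factor j : E → ℝ) := by
  unfold factor
  fun_prop

end Factor

section Glue

variable {E F : Type*} [NormedAddCommGroup E] [NormedSpace ℝ E] [NormedAddCommGroup F]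
  [NormedSpace ℝ F] {p q j : ℕ} {g : E → F} {x : E} {M : ℝ}

/-- The smooth map which pushes the exterior of the unit ball radially into the ball, fixing the
unit sphere. It plays the role of the reflection `t ↦ -2ʲ * t` in Seeley's half-space
construction. -/
noncomputable def shrink (j : ℕ) (x : E) : E := factor j x • x

/-- The general summand occurring in the derivatives of the Seeley extension: `p` counts the factors
`2ʲ` and `q` the factors `factor j x` produced by the chain rule. -/
noncomputable def summand (p q : ℕ) (g : E → F) (j : ℕ) (x : E) : F :=
  (coeff p j * factor j x ^ q) • g (shrink j x)

/-- The Seeley series outside the closed unit ball, glued to `g` (if `p = 0`) or to `0` (if `p ≠ 0`)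
inside. These are the limits of the series at the unit sphere by the moment condition
`tsum_coeff`. The extension itself is `glue 0 0 g`; its derivatives involve all `p` and `q`. -/
noncomputable def glue (p q : ℕ) (g : E → F) (x : E) : F :=
  if ‖x‖ ≤ 1 then (if p = 0 then g x else 0) else ∑' j, summand p q g j x

lemma norm_mul_norm_shrink_le_one (j : ℕ) (hx : 1 ≤ ‖x‖) : ‖x‖ * ‖shrink j x‖ ≤ 1 := by
  rw [shrink, norm_smul, Real.norm_of_nonneg (factor_pos j x).le]
  linarith [factor_mul_norm_sq_le_one j hx]

lemma shrink_mem_closedBall (j : ℕ) (hx : 1 ≤ ‖x‖) : shrink j x ∈ closedBall 0 1 := by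
  rw [mem_closedBall_zero_iff]
  exact (le_mul_of_one_le_left (norm_nonneg _) hx).trans (norm_mul_norm_shrink_le_one j hx)

lemma shrink_mem_ball (j : ℕ) (hx : 1 < ‖x‖) : shrink j x ∈ ball 0 1 := by
  rw [mem_ball_zero_iff]
  by_contra! h
  exact (norm_mul_norm_shrink_le_one j hx.le).not_gt (one_lt_mul_of_lt_of_le hx h)

lemma continuous_shrink (j : ℕ) : Continuous (shrink j : E → E) :=
  (continuous_factor j).smul continuous_id

lemma norm_summand_le (hM : ∀ y ∈ closedBall 0 1, ‖g y‖ ≤ M) (hx : 1 ≤ ‖x‖) :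
    ‖summand p q g j x‖ ≤ |coeff p j| * M := by
  have hfactor : |factor j x ^ q| ≤ 1 := by
    rw [abs_of_nonneg (pow_nonneg (factor_pos j x).le q)]
    exact pow_le_one₀ (factor_pos j x).le (factor_le_one j hx)
  rw [summand, norm_smul, Real.norm_eq_abs, abs_mul]
  gcongr
  · exact mul_le_of_le_one_right (abs_nonneg _) hfactor
  · exact hM _ (shrink_mem_closedBall j hx)

lemma summable_summand [CompleteSpace F] (hM : ∀ y ∈ closedBall 0 1, ‖g y‖ ≤ M) (hx : 1 ≤ ‖x‖) :
    Summable fun j ↦ summand p q g j x :=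
  .of_norm_bounded ((summable_coeff p).abs.mul_right M) fun _ ↦ norm_summand_le hM hx

lemma glue_of_norm_le_one (hx : ‖x‖ ≤ 1) : glue p q g x = if p = 0 then g x else 0 := if_pos hx

lemma glue_of_one_lt_norm (hx : 1 < ‖x‖) : glue p q g x = ∑' j, summand p q g j x :=
  if_neg hx.not_ge

lemma norm_glue_le (hM : ∀ y ∈ closedBall 0 1, ‖g y‖ ≤ M) (x : E) :
    ‖glue p q g x‖ ≤ (1 + ∑' j, |coeff p j|) * M := by
  have hM0 : 0 ≤ M := (norm_nonneg _).trans (hM 0 (by simp))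
  have hsum : 0 ≤ ∑' j, |coeff p j| := tsum_nonneg fun j ↦ abs_nonneg _
  rcases le_or_gt ‖x‖ 1 with hx | hx
  · have hle : M ≤ (1 + ∑' j, |coeff p j|) * M := le_mul_of_one_le_left hM0 (by linarith)
    rw [glue_of_norm_le_one hx]
    split_ifs
    · exact (hM x (by simpa using hx)).trans hle
    · simpa using hM0.trans hle
  · rw [glue_of_one_lt_norm hx]
    calc ‖∑' j, summand p q g j x‖ ≤ (∑' j, |coeff p j|) * M :=
          tsum_of_norm_bounded ((summable_coeff p).abs.hasSum.mul_right M)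
            fun _ ↦ norm_summand_le hM hx.le
      _ ≤ (1 + ∑' j, |coeff p j|) * M := by gcongr; linarith

lemma continuous_glue [FiniteDimensional ℝ E] [CompleteSpace F]
    (hg : ContinuousOn g (closedBall 0 1)) : Continuous (glue p q g) := by
  obtain ⟨M, hM⟩ := (isCompact_closedBall (0 : E) 1).exists_bound_of_continuousOn hg
  refine continuous_if_le continuous_norm continuous_const ?_ ?_ fun x hx ↦ ?_
  · split_ifs
    · exact hg.mono fun x hx ↦ by simpa using hx
    · exact continuousOn_const
  · refine continuousOn_tsum (fun j ↦ ?_) ((summable_coeff p).abs.mul_right M)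
      fun j x hx ↦ norm_summand_le hM hx
    exact (continuousOn_const.mul ((continuous_factor j).pow q).continuousOn).smul
      (hg.comp (continuous_shrink j).continuousOn fun x hx ↦ shrink_mem_closedBall j hx)
  · simp only [summand, shrink, factor_of_norm_eq_one _ hx, one_pow, mul_one, one_smul]
    rw [(summable_coeff p).tsum_smul_const, tsum_coeff, ite_smul, one_smul, zero_smul]

end Glue

section Derivatives

variable {E F : Type u} [NormedAddCommGroup E] [InnerProductSpace ℝ E] [NormedAddCommGroup F]
  [NormedSpace ℝ F] {p q : ℕ} {g : E → F} {g' : E → E →L[ℝ] F} {x : E}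

/-- The differential `-2⟪x, ·⟫` of the logarithm `1 - ‖x‖²` of `factor 0`. -/
noncomputable def dlogFactor : E →L[ℝ] E →L[ℝ] ℝ := (-2 : ℝ) • innerSL ℝ

/-- The combination of the values `A`, `B`, `v` of three members of the family (at the parameters
`(p, q + 1)`, `(p + 1, q + 1)` and `(p + 1, q)`) which gives the derivative of the member with
parameters `(p, q)`. -/
noncomputable def chainRule (q : ℕ) (x : E) (A B : E →L[ℝ] F) (v : F) : E →L[ℝ] F :=
  A + (dlogFactor x).smulRight (B x + (q : ℝ) • v)

lemma hasFDerivAt_factor (j : ℕ) (x : E) :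
    HasFDerivAt (factor j) ((2 ^ j * factor j x) • dlogFactor x) x := by
  have hexponent : HasFDerivAt (fun y : E ↦ -(2 ^ j * (‖y‖ ^ 2 - 1)))
      (-((2 : ℝ) ^ j • 2 • innerSL ℝ x)) x :=
    (((hasStrictFDerivAt_norm_sq x).hasFDerivAt.sub_const 1).const_mul (2 ^ j)).fun_neg
  refine hexponent.exp.congr_fderiv ?_
  rw [factor, dlogFactor, smul_apply]
  module

lemma hasFDerivAt_summand (hg : ∀ y ∈ ball 0 1, HasFDerivAt g (g' y) y) (j : ℕ) (hx : 1 < ‖x‖) :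
    HasFDerivAt (summand p q g j)
      (chainRule q x (summand p (q + 1) g' j x) (summand (p + 1) (q + 1) g' j x)
        (summand (p + 1) q g j x)) x := by
  have hfactor := hasFDerivAt_factor j x
  have hcomp := (hg _ (shrink_mem_ball j hx)).comp x (hfactor.smul (hasFDerivAt_id x))
  refine (((hfactor.pow q).const_mul (coeff p j)).smul hcomp).congr_fderiv ?_
  ext v
  rcases q with _ | q <;>
  · simp [chainRule, summand, coeff_succ, shrink]
    module

lemma contDiff_chainRule {n : WithTop ℕ∞} {A B : E → E →L[ℝ] F} {v : E → F} (hA : ContDiff ℝ n A)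
    (hB : ContDiff ℝ n B) (hv : ContDiff ℝ n v) (q : ℕ) :
    ContDiff ℝ n fun x ↦ chainRule q x (A x) (B x) (v x) :=
  hA.add <| dlogFactor.contDiff.smulRight <| (hB.clm_apply contDiff_id).add (hv.const_smul (q : ℝ))

lemma norm_chainRule_le (q : ℕ) (x : E) {A B : E →L[ℝ] F} {v : F} {a b c : ℝ} (hA : ‖A‖ ≤ a)
    (hB : ‖B‖ ≤ b) (hv : ‖v‖ ≤ c) :
    ‖chainRule q x A B v‖ ≤ a + 2 * ‖x‖ * (b * ‖x‖ + q * c) := by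
  refine (norm_add_le _ _).trans (add_le_add hA ?_)
  have hdlog : ‖dlogFactor x‖ = 2 * ‖x‖ := by
    rw [dlogFactor, smul_apply, norm_smul, innerSL_apply_norm, norm_neg, Real.norm_ofNat]
  rw [ContinuousLinearMap.norm_smulRight_apply, hdlog]
  gcongr
  refine (norm_add_le _ _).trans (add_le_add (B.le_of_opNorm_le hB x) ?_)
  rw [norm_smul, RCLike.norm_natCast]
  gcongr

lemma hasSum_chainRule {ι : Type*} {A B : ι → E →L[ℝ] F} {v : ι → F} {A₀ B₀ : E →L[ℝ] F} {v₀ : F}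
    (hA : HasSum A A₀) (hB : HasSum B B₀) (hv : HasSum v v₀) (q : ℕ) (x : E) :
    HasSum (fun i ↦ chainRule q x (A i) (B i) (v i)) (chainRule q x A₀ B₀ v₀) :=
  hA.add <| ((hB.mapL (.apply ℝ F x)).add (hv.const_smul (q : ℝ))).mapL
    (.smulRightL ℝ E F (dlogFactor x))

/-- The candidate for the derivative of `glue p q g`, where `g'` is the derivative of `g`. -/
noncomputable def glueDeriv (p q : ℕ) (g : E → F) (g' : E → E →L[ℝ] F) (x : E) : E →L[ℝ] F :=
  chainRule q x (glue p (q + 1) g' x) (glue (p + 1) (q + 1) g' x) (glue (p + 1) q g x)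

lemma hasFDerivAt_glue_of_norm_lt_one (hg : ∀ y ∈ ball 0 1, HasFDerivAt g (g' y) y)
    (hx : ‖x‖ < 1) : HasFDerivAt (glue p q g) (glueDeriv p q g g' x) x := by
  have heq : glue p q g =ᶠ[𝓝 x] fun y ↦ if p = 0 then g y else 0 := by
    filter_upwards [continuous_norm.continuousAt.eventually_lt_const hx] with y hy
    exact glue_of_norm_le_one hy.le
  have hderiv : glueDeriv p q g g' x = if p = 0 then g' x else 0 := by
    simp [glueDeriv, chainRule, glue_of_norm_le_one hx.le]
  rw [hderiv]
  refine HasFDerivAt.congr_of_eventuallyEq ?_ heq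
  split_ifs
  · exact hg x (by simpa using hx)
  · exact hasFDerivAt_const _ _

lemma hasFDerivAt_glue_of_one_lt_norm [CompleteSpace F]
    (hM : ∀ y ∈ closedBall 0 1, ‖g y‖ ≤ M) (hM' : ∀ y ∈ closedBall 0 1, ‖g' y‖ ≤ M')
    (hg : ∀ y ∈ ball 0 1, HasFDerivAt g (g' y) y) (hx : 1 < ‖x‖) :
    HasFDerivAt (glue p q g) (glueDeriv p q g g' x) x := by
  let dsummand (j : ℕ) (y : E) : E →L[ℝ] F :=
    chainRule q y (summand p (q + 1) g' j y) (summand (p + 1) (q + 1) g' j y)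
      (summand (p + 1) q g j y)
  have hsum (p : ℕ) (C : ℝ) : Summable fun j ↦ |coeff p j| * C := (summable_coeff p).abs.mul_right C
  have hnear : ∀ y ∈ ball x (‖x‖ - 1), 1 < ‖y‖ ∧ ‖y‖ ≤ 2 * ‖x‖ := fun y hy ↦ by
    have := abs_norm_sub_norm_le y x
    rw [mem_ball_iff_norm] at hy
    grind
  have hxx : x ∈ ball x (‖x‖ - 1) := mem_ball_self (sub_pos.2 hx)
  have hderiv : HasFDerivAt (fun y ↦ ∑' j, summand p q g j y) (∑' j, dsummand j x) x := by
    refine hasFDerivAt_tsum_of_isPreconnected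
      ((hsum p M').add ((((hsum (p + 1) M').mul_right (2 * ‖x‖)).add
        ((hsum (p + 1) M).mul_left (q : ℝ))).mul_left (2 * (2 * ‖x‖))))
      isOpen_ball (convex_ball _ _).isPreconnected
      (fun j y hy ↦ hasFDerivAt_summand hg j (hnear y hy).1) (fun j y hy ↦ ?_) hxx
      (summable_summand hM hx.le) hxx
    obtain ⟨hy, hyx⟩ := hnear y hy
    refine (norm_chainRule_le q y (norm_summand_le hM' hy.le) (norm_summand_le hM' hy.le)
      (norm_summand_le hM hy.le)).trans ?_
    have hM0 : 0 ≤ M := (norm_nonneg _).trans (hM 0 (by simp))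
    have hM0' : 0 ≤ M' := (norm_nonneg _).trans (hM' 0 (by simp))
    gcongr
  have hglueDeriv : ∑' j, dsummand j x = glueDeriv p q g g' x := by
    simp only [glueDeriv, glue_of_one_lt_norm hx]
    exact (hasSum_chainRule (summable_summand hM' hx.le).hasSum (summable_summand hM' hx.le).hasSum
      (summable_summand hM hx.le).hasSum q x).tsum_eq
  rw [← hglueDeriv]
  refine hderiv.congr_of_eventuallyEq ?_
  filter_upwards [continuous_norm.continuousAt.eventually_const_lt hx] with y hy
  exact glue_of_one_lt_norm hy

lemma hasFDerivAt_glue [FiniteDimensional ℝ E] [CompleteSpace F]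
    (hg : ContDiffOn ℝ 1 g (closedBall 0 1)) (x : E) :
    HasFDerivAt (glue p q g) (glueDeriv p q g (fderivWithin ℝ g (closedBall 0 1)) x) x := by
  set g' := fderivWithin ℝ g (closedBall 0 1)
  have hg' : ContinuousOn g' (closedBall 0 1) :=
    hg.continuousOn_fderivWithin (uniqueDiffOn_closedBall 0 one_pos) le_rfl
  have hderiv : ∀ y ∈ ball 0 1, HasFDerivAt g (g' y) y := fun y hy ↦
    ((hg.differentiableOn one_ne_zero) y (ball_subset_closedBall hy)).hasFDerivWithinAt.hasFDerivAt
      (closedBall_mem_nhds_of_mem hy)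
  obtain ⟨M, hM⟩ := (isCompact_closedBall 0 1).exists_bound_of_continuousOn hg.continuousOn
  obtain ⟨M', hM'⟩ := (isCompact_closedBall 0 1).exists_bound_of_continuousOn hg'
  refine hasFDerivAt_of_hasFDerivAt_off_countable (Z := sphere 0 1)
    (continuous_glue hg.continuousOn) ?_ (fun v hv ↦ (finite_line_inter_sphere 0 x 1 hv).countable)
    fun y hy ↦ ?_
  · exact contDiff_zero.1 <| contDiff_chainRule (contDiff_zero.2 (continuous_glue hg'))
      (contDiff_zero.2 (continuous_glue hg')) (contDiff_zero.2 (continuous_glue hg.continuousOn)) q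
  · rw [mem_sphere_zero_iff_norm] at hy
    rcases lt_or_gt_of_ne hy with hy | hy
    · exact hasFDerivAt_glue_of_norm_lt_one hderiv hy
    · exact hasFDerivAt_glue_of_one_lt_norm hM hM' hderiv hy

lemma contDiff_glue [FiniteDimensional ℝ E] (n : ℕ) : ∀ {F : Type u} [NormedAddCommGroup F]
    [NormedSpace ℝ F] [CompleteSpace F] {p q : ℕ} {g : E → F},
    ContDiffOn ℝ n g (closedBall 0 1) → ContDiff ℝ n (glue p q g) := by
  induction n with
  | zero => exact fun hg ↦ contDiff_zero.2 (continuous_glue hg.continuousOn)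
  | succ n ih =>
    intro F _ _ _ p q g hg
    have hg' : ContDiffOn ℝ n (fderivWithin ℝ g (closedBall 0 1)) (closedBall 0 1) :=
      hg.fderivWithin (uniqueDiffOn_closedBall 0 one_pos) (by norm_cast)
    rw [Nat.cast_succ, contDiff_succ_iff_hasFDerivAt]
    exact ⟨_, contDiff_chainRule (ih hg') (ih hg') (ih (hg.of_le (by norm_cast; lia))) q,
      hasFDerivAt_glue (hg.of_le (by norm_cast; lia))⟩

lemma exists_derivBoundOn_chainRule {s : Set E} (hs : UniqueDiffOn ℝ s) (hcomp : IsCompact s)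
    (n q : ℕ) : ∃ K₁ K₂, 0 ≤ K₁ ∧ 0 ≤ K₂ ∧ ∀ {A B : E → E →L[ℝ] F} {v : E → F} {a b c : ℝ},
      ContDiffOn ℝ n A s → ContDiffOn ℝ n B s → ContDiffOn ℝ n v s → DerivBoundOn n A s a →
      DerivBoundOn n B s b → DerivBoundOn n v s c →
      DerivBoundOn n (fun x ↦ chainRule q x (A x) (B x) (v x)) s (a + K₁ * b + K₂ * c) := by
  have hdlog : ContDiffOn ℝ n (dlogFactor : E → E →L[ℝ] ℝ) s := dlogFactor.contDiff.contDiffOn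
  obtain ⟨D, hD, hdlogD⟩ := exists_derivBoundOn_of_isCompact hs hcomp hdlog
  obtain ⟨R, hR, hidR⟩ := exists_derivBoundOn_of_isCompact hs hcomp (contDiffOn_id (n := n))
  refine ⟨2 ^ n * D * (2 ^ n * R), 2 ^ n * D * q, by positivity, by positivity,
    fun {A B v a b c} hA hB hv ha hb hc ↦ ?_⟩
  have hBx : ContDiffOn ℝ n (fun x ↦ B x x) s := hB.clm_apply contDiffOn_id
  have hqv : ContDiffOn ℝ n (fun x ↦ (q : ℝ) • v x) s := hv.const_smul (q : ℝ)
  refine (ha.add hs hA (hdlog.smulRight (hBx.add hqv)) <| hdlogD.smulRight hs hdlog (hBx.add hqv) <|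
    (hb.clm_apply hs hB contDiffOn_id hidR).add hs hBx hqv (hc.const_smul hs hv q)).mono ?_
  rw [Nat.abs_cast]
  linarith

lemma exists_derivBoundOn_glue [FiniteDimensional ℝ E] {s : Set E} (hs : UniqueDiffOn ℝ s)
    (hcomp : IsCompact s) (n : ℕ) : ∀ (F : Type u) [NormedAddCommGroup F] [NormedSpace ℝ F]
    [CompleteSpace F] (p q : ℕ), ∃ C, 0 ≤ C ∧ ∀ {g : E → F} {M : ℝ},
      ContDiffOn ℝ n g (closedBall 0 1) → DerivBoundOn n g (closedBall 0 1) M →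
      DerivBoundOn n (glue p q g) s (C * M) := by
  induction n with
  | zero =>
    exact fun F _ _ _ p q ↦ ⟨_, by positivity, fun _ hM ↦ DerivBoundOn.zero_iff.2 fun x _ ↦
      norm_glue_le (fun y hy ↦ hM.norm_le hy) x⟩
  | succ n ih =>
    intro F _ _ _ p q
    obtain ⟨C₁, hC₁, hA⟩ := ih (E →L[ℝ] F) p (q + 1)
    obtain ⟨C₂, hC₂, hB⟩ := ih (E →L[ℝ] F) (p + 1) (q + 1)
    obtain ⟨C₃, hC₃, hv⟩ := ih F (p + 1) q
    obtain ⟨K₁, K₂, hK₁, hK₂, hchain⟩ := exists_derivBoundOn_chainRule (F := F) hs hcomp n q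
    have hball := uniqueDiffOn_closedBall (0 : E) one_pos
    refine ⟨(1 + ∑' j, |coeff p j|) + (C₁ + K₁ * C₂ + K₂ * C₃), by positivity,
      fun {g M} hg hM ↦ ?_⟩
    have hM0 : 0 ≤ M := hM.nonneg ⟨0, by simp⟩
    obtain ⟨-, hM'⟩ := (DerivBoundOn.succ_iff hball).1 hM
    have hgn : ContDiffOn ℝ n g (closedBall 0 1) := hg.of_le (by norm_cast; lia)
    have hg' : ContDiffOn ℝ n (fderivWithin ℝ g (closedBall 0 1)) (closedBall 0 1) :=
      hg.fderivWithin hball (by norm_cast)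
    have hderiv : EqOn (fderivWithin ℝ (glue p q g) s)
        (glueDeriv p q g (fderivWithin ℝ g (closedBall 0 1))) s := fun x hx ↦
      (hasFDerivAt_glue (hg.of_le (by norm_cast; lia)) x).hasFDerivWithinAt.fderivWithin (hs x hx)
    rw [DerivBoundOn.succ_iff hs, add_mul]
    refine ⟨fun x _ ↦ (norm_glue_le (fun y hy ↦ hM.norm_le hy) x).trans
      (le_add_of_nonneg_right (by positivity)), ?_⟩
    have hbound := hchain (contDiff_glue n hg').contDiffOn (contDiff_glue n hg').contDiffOn
      (contDiff_glue n hgn).contDiffOn (hA hg' hM') (hB hg' hM') (hv hgn (hM.of_le n.le_succ))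
    refine (hbound.congr hderiv).mono ?_
    have : 0 ≤ (1 + ∑' j, |coeff p j|) * M := by positivity
    linarith

end Derivatives

end Seeley

namespace Seeley

section Extend

variable {E F : Type u} [NormedAddCommGroup E] [InnerProductSpace ℝ E] [NormedAddCommGroup F]
  [NormedSpace ℝ F] {n i : ℕ} {f : E → F} {x : E}

/-- A smooth cutoff which is `1` on the closed unit ball and supported in the ball of radius `2`. -/
noncomputable def cutoff (E : Type*) [NormedAddCommGroup E] [InnerProductSpace ℝ E] :
    ContDiffBump (0 : E) where
  rIn := 1
  rOut := 2
  rIn_pos := one_pos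
  rIn_lt_rOut := one_lt_two

/-- Seeley's extension of a function on the closed unit ball, cut off to have compact support. -/
noncomputable def extend (f : E → F) (x : E) : F := cutoff E x • glue 0 0 f x

lemma eqOn_extend (f : E → F) : EqOn (extend f) f (closedBall 0 1) := fun x hx ↦ by
  rw [extend, (cutoff E).one_of_mem_closedBall hx, one_smul,
    glue_of_norm_le_one (mem_closedBall_zero_iff.1 hx), if_pos rfl]

lemma tsupport_extend_subset [FiniteDimensional ℝ E] (f : E → F) :
    tsupport (extend f) ⊆ closedBall 0 2 :=
  (tsupport_smul_subset_left _ _).trans (cutoff E).tsupport_eq.subset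

lemma contDiff_extend [FiniteDimensional ℝ E] [CompleteSpace F]
    (hf : ContDiffOn ℝ n f (closedBall 0 1)) : ContDiff ℝ n (extend f) :=
  (cutoff E).contDiff.smul (contDiff_glue n hf)

lemma iteratedFDeriv_extend [FiniteDimensional ℝ E] [CompleteSpace F]
    (hf : ContDiffOn ℝ n f (closedBall 0 1)) (hi : i ≤ n) (hx : x ∈ closedBall 0 1) :
    iteratedFDeriv ℝ i (extend f) x = iteratedFDerivWithin ℝ i f (closedBall 0 1) x := by
  rw [← iteratedFDerivWithin_congr (eqOn_extend f) hx]
  exact (iteratedFDerivWithin_eq_iteratedFDeriv (uniqueDiffOn_closedBall 0 one_pos)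
    ((contDiff_extend hf).contDiffAt.of_le (mod_cast hi)) hx).symm

lemma extend_smul {𝕜 : Type*} [DivisionRing 𝕜] [Module 𝕜 F] [ContinuousConstSMul 𝕜 F]
    [SMulCommClass 𝕜 ℝ F] (c : 𝕜) (f : E → F) : extend (c • f) = c • extend f := by
  ext x
  have hglue : glue 0 0 (c • f) x = c • glue 0 0 f x := by
    rcases le_or_gt ‖x‖ 1 with hx | hx
    · simp [glue_of_norm_le_one hx]
    · have hsummand (j : ℕ) : summand 0 0 (c • f) j x = c • summand 0 0 f j x :=
        (smul_comm c (coeff 0 j * factor j x ^ 0) (f (shrink j x))).symm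
      simp only [glue_of_one_lt_norm hx, hsummand]
      exact tsum_const_smul'' c
  rw [extend, hglue]
  exact (smul_comm c (cutoff E x) (glue 0 0 f x)).symm

variable (F) in
lemma exists_norm_iteratedFDeriv_extend_le [FiniteDimensional ℝ E] [CompleteSpace F] (n : ℕ) :
    ∃ C, 0 ≤ C ∧ ∀ {f : E → F} {M : ℝ}, ContDiffOn ℝ n f (closedBall 0 1) →
      DerivBoundOn n f (closedBall 0 1) M →
      ∀ i ≤ n, ∀ x, ‖iteratedFDeriv ℝ i (extend f) x‖ ≤ C * M := by
  have hs : UniqueDiffOn ℝ (closedBall (0 : E) 2) := uniqueDiffOn_closedBall 0 two_pos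
  have hcomp : IsCompact (closedBall (0 : E) 2) := isCompact_closedBall 0 2
  have hcutoff : ContDiffOn ℝ n (cutoff E) (closedBall 0 2) := (cutoff E).contDiff.contDiffOn
  obtain ⟨K, hK, hcutoffK⟩ := exists_derivBoundOn_of_isCompact hs hcomp hcutoff
  obtain ⟨C, hC, hglue⟩ := exists_derivBoundOn_glue hs hcomp n F 0 0
  refine ⟨2 ^ n * K * C, by positivity, fun {f M} hf hM i hi x ↦ ?_⟩
  by_cases hx : x ∈ closedBall 0 2
  · rw [← iteratedFDerivWithin_eq_iteratedFDeriv hs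
      ((contDiff_extend hf).contDiffAt.of_le (mod_cast hi)) hx, mul_assoc _ C]
    exact hcutoffK.smul hs hcutoff (contDiff_glue n hf).contDiffOn (hglue hf hM) i hi x hx
  · have hM0 : 0 ≤ M := hM.nonneg ⟨0, by simp⟩
    rw [image_eq_zero_of_notMem_tsupport fun h ↦ hx <| tsupport_extend_subset f <|
      tsupport_iteratedFDeriv_subset i h, norm_zero]
    positivity

end Extend

section Linear

variable {E F : Type u} [NormedAddCommGroup E] [InnerProductSpace ℝ E] [FiniteDimensional ℝ E]
  [NormedAddCommGroup F] [NormedSpace ℝ F] [CompleteSpace F] {f g : E → F} {x : E}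

lemma summable_summand_of_continuousOn (hf : ContinuousOn f (closedBall 0 1)) (p q : ℕ)
    (hx : 1 ≤ ‖x‖) : Summable fun j ↦ summand p q f j x :=
  let ⟨_, hM⟩ := (isCompact_closedBall 0 1).exists_bound_of_continuousOn hf
  summable_summand hM hx

lemma extend_add (hf : ContinuousOn f (closedBall 0 1)) (hg : ContinuousOn g (closedBall 0 1)) :
    extend (f + g) = extend f + extend g := by
  ext x
  simp only [extend, Pi.add_apply, ← smul_add]
  congr 1
  rcases le_or_gt ‖x‖ 1 with hx | hx
  · simp [glue_of_norm_le_one hx]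
  · simp only [glue_of_one_lt_norm hx, summand, Pi.add_apply, smul_add]
    exact (summable_summand_of_continuousOn hf 0 0 hx.le).tsum_add
      (summable_summand_of_continuousOn hg 0 0 hx.le)

variable (E F) in
lemma exists_linearMap_eq_extend (𝕜 : Type*) [DivisionRing 𝕜] [Module 𝕜 F]
    [ContinuousConstSMul 𝕜 F] [SMulCommClass 𝕜 ℝ F] : ∃ ε : (E → F) →ₗ[𝕜] (E → F),
    ∀ f, ContinuousOn f (closedBall 0 1) → ε f = extend f := by
  let V : Submodule 𝕜 (E → F) :=
    { carrier := {f | ContinuousOn f (closedBall 0 1)}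
      add_mem' := ContinuousOn.add
      zero_mem' := continuousOn_const
      smul_mem' := fun c _ hf ↦ hf.const_smul c }
  let ε₀ : V →ₗ[𝕜] (E → F) :=
    { toFun := fun f ↦ extend f.1
      map_add' := fun f g ↦ extend_add f.2 g.2
      map_smul' := fun c f ↦ extend_smul c f.1 }
  obtain ⟨ε, hε⟩ := ε₀.exists_extend
  exact ⟨ε, fun f hf ↦ LinearMap.congr_fun hε ⟨f, hf⟩⟩

end Linear

end Seeley

section Norms

variable {E F : Type*} [NormedAddCommGroup E] [NormedSpace ℝ E] [NormedAddCommGroup F]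
  [NormedSpace ℝ F] {n k i : ℕ} {f : E → F} {x : E}

/-- The space `C^∞₀(B̄₁, F)` of smooth functions on the closed unit ball which are flat at the
origin. Functions are represented by arbitrary extensions to `E`. -/
def IsFlatOnBall (f : E → F) : Prop :=
  ContDiffOn ℝ (⊤ : ℕ∞) f (closedBall 0 1) ∧
    ∀ i : ℕ, iteratedFDerivWithin ℝ i f (closedBall 0 1) 0 = 0

/-- The weighted norm `⟨f⟩_{n,k,1}` on `C^∞₀(B̄₁, F)`. -/
noncomputable def weightedBallNorm (n k : ℕ) (f : E → F) : ℝ :=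
  ⨆ p : (closedBall (0 : E) 1 \ {0} : Set E) × Fin (n + 1),
    ‖(p.1 : E)‖ ^ (-(k : ℤ)) * ‖iteratedFDerivWithin ℝ p.2 f (closedBall 0 1) p.1‖

/-- The weighted norm `⟨f⟩_{n,k}` on the Schwartz functions which are flat at the origin. -/
noncomputable def weightedNorm (n k : ℕ) (f : E → F) : ℝ :=
  ⨆ p : ({x : E | x ≠ 0} : Set E) × Fin (n + 1) × Fin (k + 1),
    ‖(p.1 : E)‖ ^ (-((p.2.2 : ℕ) : ℤ)) * ‖iteratedFDeriv ℝ p.2.1 f p.1‖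

lemma IsFlatOnBall.contDiffOn (hf : IsFlatOnBall f) (n : ℕ) :
    ContDiffOn ℝ n f (closedBall 0 1) := hf.1.of_le (mod_cast le_top)

lemma weightedBallNorm_nonneg (n k : ℕ) (f : E → F) : 0 ≤ weightedBallNorm n k f :=
  Real.iSup_nonneg fun _ ↦ by positivity

lemma IsFlatOnBall.zpow_mul_norm_le_weightedBallNorm [FiniteDimensional ℝ E] (hf : IsFlatOnBall f)
    (hi : i ≤ n) (hx : x ∈ closedBall 0 1) (hx0 : x ≠ 0) (k : ℕ) :
    ‖x‖ ^ (-(k : ℤ)) * ‖iteratedFDerivWithin ℝ i f (closedBall 0 1) x‖ ≤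
      weightedBallNorm n k f := by
  choose C hC using fun i ↦ exists_norm_iteratedFDerivWithin_le_mul_pow
    (isCompact_closedBall (0 : E) 1) (convex_closedBall 0 1) (uniqueDiffOn_closedBall 0 one_pos)
    (mem_closedBall_self zero_le_one) hf.1 hf.2 i k
  have hbdd : BddAbove (range fun p : (closedBall (0 : E) 1 \ {0} : Set E) × Fin (n + 1) ↦
      ‖(p.1 : E)‖ ^ (-(k : ℤ)) * ‖iteratedFDerivWithin ℝ p.2 f (closedBall 0 1) p.1‖) := by
    refine ⟨∑ i : Fin (n + 1), |C i|, ?_⟩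
    rintro _ ⟨⟨⟨y, hy, hy0⟩, i⟩, rfl⟩
    have hypos : 0 < ‖y‖ ^ k := pow_pos (norm_pos_iff.2 hy0) k
    simp only [zpow_neg, zpow_natCast]
    rw [inv_mul_le_iff₀ hypos, mul_comm]
    calc ‖iteratedFDerivWithin ℝ i f (closedBall 0 1) y‖ ≤ C i * ‖y‖ ^ k := by
          simpa using hC i y hy
      _ ≤ (∑ i : Fin (n + 1), |C i|) * ‖y‖ ^ k := by
          gcongr
          exact (le_abs_self _).trans <| Finset.single_le_sum (f := fun i : Fin (n + 1) ↦ |C i|)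
            (fun _ _ ↦ abs_nonneg _) (Finset.mem_univ i)
  exact le_ciSup hbdd (⟨x, hx, hx0⟩, ⟨i, Nat.lt_succ_of_le hi⟩)

lemma IsFlatOnBall.derivBoundOn_weightedBallNorm [FiniteDimensional ℝ E] (hf : IsFlatOnBall f)
    (n k : ℕ) : DerivBoundOn n f (closedBall 0 1) (weightedBallNorm n k f) := by
  intro i hi x hx
  by_cases hx0 : x = 0
  · rw [hx0, hf.2 i, norm_zero]
    exact weightedBallNorm_nonneg n k f
  · refine le_trans ?_ (hf.zpow_mul_norm_le_weightedBallNorm hi hx hx0 k)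
    refine le_mul_of_one_le_left (norm_nonneg _) ?_
    rw [zpow_neg, zpow_natCast]
    exact (one_le_inv₀ (pow_pos (norm_pos_iff.2 hx0) k)).2
      (pow_le_one₀ (norm_nonneg x) (mem_closedBall_zero_iff.1 hx))

end Norms

section Main

variable {E F : Type u} [NormedAddCommGroup E] [InnerProductSpace ℝ E] [FiniteDimensional ℝ E]
  [NormedAddCommGroup F] [NormedSpace ℝ F] [CompleteSpace F] {f : E → F}

lemma IsFlatOnBall.zpow_mul_norm_iteratedFDeriv_extend_le {n k i l : ℕ} {C : ℝ} {x : E}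
    (hf : IsFlatOnBall f)
    (hC : ∀ x, ‖iteratedFDeriv ℝ i (Seeley.extend f) x‖ ≤ C * weightedBallNorm n k f)
    (hi : i ≤ n) (hl : l ≤ k) (hx : x ≠ 0) :
    ‖x‖ ^ (-(l : ℤ)) * ‖iteratedFDeriv ℝ i (Seeley.extend f) x‖ ≤
      (1 + C) * weightedBallNorm n k f := by
  have hnorm := weightedBallNorm_nonneg n k f
  have hCnorm : 0 ≤ C * weightedBallNorm n k f := (norm_nonneg _).trans (hC x)
  rcases le_or_gt ‖x‖ 1 with hx1 | hx1
  · have hmem : x ∈ closedBall 0 1 := mem_closedBall_zero_iff.2 hx1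
    calc ‖x‖ ^ (-(l : ℤ)) * ‖iteratedFDeriv ℝ i (Seeley.extend f) x‖
        ≤ ‖x‖ ^ (-(k : ℤ)) * ‖iteratedFDerivWithin ℝ i f (closedBall 0 1) x‖ := by
          rw [Seeley.iteratedFDeriv_extend (hf.contDiffOn n) hi hmem]
          gcongr ?_ * _
          exact zpow_le_zpow_right_of_le_one₀ (norm_pos_iff.2 hx) hx1 (by lia)
      _ ≤ weightedBallNorm n k f := hf.zpow_mul_norm_le_weightedBallNorm hi hmem hx k
      _ ≤ (1 + C) * weightedBallNorm n k f := by linarith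
  · calc ‖x‖ ^ (-(l : ℤ)) * ‖iteratedFDeriv ℝ i (Seeley.extend f) x‖
        ≤ 1 * (C * weightedBallNorm n k f) := by
          gcongr
          · exact zpow_le_one_of_nonpos₀ hx1.le (by lia)
          · exact hC x
      _ ≤ (1 + C) * weightedBallNorm n k f := by linarith

variable (F) in
lemma exists_weightedNorm_extend_le (n k : ℕ) : ∃ C > 0, ∀ f : E → F, IsFlatOnBall f →
    weightedNorm n k (Seeley.extend f) ≤ C * weightedBallNorm n k f := by
  obtain ⟨C, hC, hbound⟩ := Seeley.exists_norm_iteratedFDeriv_extend_le (E := E) F n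
  refine ⟨1 + C, by positivity, fun f hf ↦ Real.iSup_le ?_ ?_⟩
  · rintro ⟨⟨x, hx⟩, i, l⟩
    exact hf.zpow_mul_norm_iteratedFDeriv_extend_le
      (hbound (hf.contDiffOn n) (hf.derivBoundOn_weightedBallNorm n k) i i.is_le)
      i.is_le l.is_le hx
  · exact mul_nonneg (by positivity) (weightedBallNorm_nonneg n k f)

end Main

theorem extension_operator_general (E F : Type u) [NormedAddCommGroup E] [InnerProductSpace ℝ E]
    [FiniteDimensional ℝ E] [NormedAddCommGroup F] [NormedSpace ℝ F] [CompleteSpace F]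
    (𝕜 : Type*) [DivisionRing 𝕜] [Module 𝕜 F] [ContinuousConstSMul 𝕜 F] [SMulCommClass 𝕜 ℝ F] :
    ∃ ε : (E → F) →ₗ[𝕜] (E → F),
      (∀ f, IsFlatOnBall f →
        ContDiff ℝ (⊤ : ℕ∞) (ε f) ∧
        HasCompactSupport (ε f) ∧
        (∀ i : ℕ, iteratedFDeriv ℝ i (ε f) 0 = 0) ∧
        EqOn (ε f) f (closedBall 0 1)) ∧
      ∀ n k : ℕ, ∃ C > (0 : ℝ), ∀ f, IsFlatOnBall f →
        weightedNorm n k (ε f) ≤ C * weightedBallNorm n k f := by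
  obtain ⟨ε, hε⟩ := Seeley.exists_linearMap_eq_extend E F 𝕜
  have hεflat (f : E → F) (hf : IsFlatOnBall f) : ε f = Seeley.extend f := hε f hf.1.continuousOn
  refine ⟨ε, fun f hf ↦ ?_, fun n k ↦ ?_⟩
  · rw [hεflat f hf]
    refine ⟨contDiff_infty.2 fun n ↦ Seeley.contDiff_extend (hf.contDiffOn n),
      .of_isClosed_subset (isCompact_closedBall 0 2) (isClosed_tsupport _)
        (Seeley.tsupport_extend_subset f), fun i ↦ ?_, Seeley.eqOn_extend f⟩
    rw [Seeley.iteratedFDeriv_extend (hf.contDiffOn i) le_rfl (by simp), hf.2 i]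
  · obtain ⟨C, hC, hbound⟩ := exists_weightedNorm_extend_le (E := E) F n k
    exact ⟨C, hC, fun f hf ↦ hεflat f hf ▸ hbound f hf⟩

/-- there is a linear extension operator
`ε : C^∞₀(B̄_1, ℂ) → S₀(ℝ^m)`: for each smooth `f` on `B̄_1` flat at the origin, `ε f`
is a smooth compactly supported (hence Schwartz) function, flat at the origin,
extending `f`, and satisfying `⟨ε f⟩_{n,k} ≤ C(n,k) ⟨f⟩_{n,k,1}`. -/
theorem extension_operator (m : ℕ) (hm : 1 ≤ m) :
    ∃ ε : (EuclideanSpace ℝ (Fin m) → ℂ) →ₗ[ℂ] (EuclideanSpace ℝ (Fin m) → ℂ),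
      (∀ f, FlatSmoothOnBall m f →
        ContDiff ℝ (⊤ : ℕ∞) (ε f) ∧
        HasCompactSupport (ε f) ∧
        (∀ i : ℕ, iteratedFDeriv ℝ i (ε f) 0 = 0) ∧
        EqOn (ε f) f (closedBall 0 1)) ∧
      ∀ n k : ℕ, ∃ C > (0 : ℝ), ∀ f, FlatSmoothOnBall m f →
        flatGlobalNorm m n k (ε f) ≤ C * flatBallNorm m n k f :=
  extension_operator_general (EuclideanSpace ℝ (Fin m)) ℂ ℂ
end

section
/- Let K ∈ S(ℝ^m) be a Schwartz function and for t > 0 set K_t(x) := t^m K(t·x). Then for all n, k, l ∈ ℕ there exists a constant C = C(K, n, k, l) > 0 such that for all f ∈ S(ℝ^m) and all t ≥ 1, ‖K_t * f‖_{n+l,k} ≤ C · t^l · ‖f‖_{n,k}, where * denotes convolution. -/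
open Metric Set MeasureTheory SchwartzMap

/-- The Schwartz norm `‖f‖_{n,k} = sup_x max_{|a| ≤ n, l ≤ k} |x|^l |D^a f(x)|`. -/
noncomputable def schwartzNorm (m : ℕ) (n k : ℕ)
    (f : EuclideanSpace ℝ (Fin m) → ℂ) : ℝ :=
  ⨆ p : EuclideanSpace ℝ (Fin m) × Fin (n + 1) × Fin (k + 1),
    ‖p.1‖ ^ (p.2.2 : ℕ) * ‖iteratedFDeriv ℝ p.2.1 f p.1‖

/-- The convolution `(f * g)(x) = ∫ f(x - y) g(y) dy`. -/
noncomputable def conv (m : ℕ) (f g : EuclideanSpace ℝ (Fin m) → ℂ)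
    (x : EuclideanSpace ℝ (Fin m)) : ℂ :=
  ∫ y : EuclideanSpace ℝ (Fin m), f (x - y) * g y

/-!
Of the at most `n + l` derivatives falling on `K_t * f`, put `i ≤ l` on the kernel and `p ≤ n` on
`f`. The weight `(1 + |x|)^k` is submultiplicative, so it distributes over the two factors of the
convolution: on one side it is absorbed by the norm of `f`, on the other by the weighted `L¹` norm
of `D^i K_t`, which for `t ≥ 1` is at most `t^i` times that of `D^i K`.
-/

open Module LineDeriv FourierTransform Convolution

section Weight

variable {𝕜 E F₁ F₂ F₃ : Type*} [NormedAddCommGroup E]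

theorem one_add_norm_le_mul_one_add_norm_sub (x y : E) :
    1 + ‖x‖ ≤ (1 + ‖y‖) * (1 + ‖x - y‖) := by
  have h_triangle : ‖x‖ ≤ ‖y‖ + ‖x - y‖ := norm_le_norm_add_norm_sub' x y
  have h_cross : 0 ≤ ‖y‖ * ‖x - y‖ := by positivity
  linarith

variable [NontriviallyNormedField 𝕜]
  [NormedAddCommGroup F₁] [NormedSpace 𝕜 F₁] [NormedAddCommGroup F₂] [NormedSpace 𝕜 F₂]
  [NormedAddCommGroup F₃] [NormedSpace 𝕜 F₃] [NormedSpace ℝ F₃]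

theorem one_add_norm_pow_mul_norm_convolution_le [MeasurableSpace E] {μ : Measure E}
    (B : F₁ →L[𝕜] F₂ →L[𝕜] F₃) {f : E → F₁} {g : E → F₂} {H : E → ℝ} {A : ℝ} {k : ℕ}
    (hH : Integrable H μ) (hf : ∀ y, (1 + ‖y‖) ^ k * ‖f y‖ ≤ H y)
    (hg : ∀ y, (1 + ‖y‖) ^ k * ‖g y‖ ≤ A) (x : E) :
    (1 + ‖x‖) ^ k * ‖(f ⋆[B, μ] g) x‖ ≤ ‖B‖ * A * ∫ y, H y ∂μ := by
  have h_integrand (y : E) :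
      ‖(1 + ‖x‖) ^ k • B (f y) (g (x - y))‖ ≤ ‖B‖ * A * H y := by
    have hA : 0 ≤ A := le_trans (by positivity) (hg 0)
    calc ‖(1 + ‖x‖) ^ k • B (f y) (g (x - y))‖
        = (1 + ‖x‖) ^ k * ‖B (f y) (g (x - y))‖ := by
          rw [norm_smul, Real.norm_of_nonneg (by positivity)]
      _ ≤ ((1 + ‖y‖) * (1 + ‖x - y‖)) ^ k * (‖B‖ * ‖f y‖ * ‖g (x - y)‖) := by
          gcongr
          · exact one_add_norm_le_mul_one_add_norm_sub x y
          · exact B.le_opNorm₂ _ _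
      _ = ‖B‖ * (((1 + ‖x - y‖) ^ k * ‖g (x - y)‖) * ((1 + ‖y‖) ^ k * ‖f y‖)) := by
          rw [mul_pow]
          ring
      _ ≤ ‖B‖ * (A * H y) := by
          gcongr
          · exact hg _
          · exact hf y
      _ = ‖B‖ * A * H y := by ring
  calc (1 + ‖x‖) ^ k * ‖(f ⋆[B, μ] g) x‖
      = ‖∫ y, (1 + ‖x‖) ^ k • B (f y) (g (x - y)) ∂μ‖ := by
        rw [integral_smul, norm_smul, Real.norm_of_nonneg (by positivity), convolution_def]
    _ ≤ ∫ y, ‖B‖ * A * H y ∂μ :=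
        norm_integral_le_of_norm_le (hH.const_mul _) (.of_forall h_integrand)
    _ = ‖B‖ * A * ∫ y, H y ∂μ := integral_const_mul _ _

end Weight

section DerivativeNorms

variable {E F : Type*} [NormedAddCommGroup E] [NormedSpace ℝ E]
  [NormedAddCommGroup F] [NormedSpace ℝ F]

/-- The weighted `L¹` norm `∫ (1 + |w|)^k |D^i f(w)| dw` of the `i`-th derivative of `f`; it
measures how much a convolution with `f` enlarges weighted sup norms when `i` derivatives fall on
`f`. The value is `0` if the integrand is not integrable. -/
noncomputable def weightedL1Norm [MeasureSpace E] (k i : ℕ) (f : E → F) : ℝ :=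
  ∫ w, (1 + ‖w‖) ^ k * ‖iteratedFDeriv ℝ i f w‖

theorem weightedL1Norm_nonneg [MeasureSpace E] (k i : ℕ) (f : E → F) :
    0 ≤ weightedL1Norm k i f :=
  integral_nonneg fun _ => by positivity

theorem integrable_one_add_norm_pow_mul_iteratedFDeriv [MeasurableSpace E] [BorelSpace E]
    [SecondCountableTopology E] {μ : Measure E} [μ.HasTemperateGrowth] (f : 𝓢(E, F)) (k i : ℕ) :
    Integrable (fun w => (1 + ‖w‖) ^ k * ‖iteratedFDeriv ℝ i f w‖) μ := by
  have h_binomial (w : E) : (1 + ‖w‖) ^ k * ‖iteratedFDeriv ℝ i f w‖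
      = ∑ j ∈ Finset.range (k + 1), (k.choose j : ℝ) * (‖w‖ ^ j * ‖iteratedFDeriv ℝ i f w‖) := by
    rw [add_comm, add_pow, Finset.sum_mul]
    exact Finset.sum_congr rfl fun j _ => by rw [one_pow]; ring
  simp_rw [h_binomial]
  exact integrable_finsetSum _ fun j _ => (f.integrable_pow_mul_iteratedFDeriv μ j i).const_mul _

theorem one_add_norm_pow_mul_norm_iteratedLineDerivOp_le (f : 𝓢(E, F)) (k : ℕ) {i : ℕ}
    (v : Fin i → E) (y : E) :
    (1 + ‖y‖) ^ k * ‖∂^{v} f y‖ ≤ (1 + ‖y‖) ^ k * ‖iteratedFDeriv ℝ i f y‖ * ∏ j, ‖v j‖ := by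
  rw [SchwartzMap.iteratedLineDerivOp_eq_iteratedFDeriv, mul_assoc]
  gcongr
  exact ContinuousMultilinearMap.le_opNorm _ _

/-- The `L¹`-normalized dilation `x ↦ t ^ d • K (t • x)`, `d = dim E`, of a Schwartz function, as a
Schwartz function: the kernel `K_t`. -/
noncomputable def l1Dilation {t : ℝ} (ht : t ≠ 0) (K : 𝓢(E, F)) : 𝓢(E, F) :=
  t ^ finrank ℝ E • SchwartzMap.compCLMOfContinuousLinearEquiv ℝ
    (ContinuousLinearEquiv.smulLeft (Units.mk0 t ht)) K

theorem l1Dilation_apply {t : ℝ} (ht : t ≠ 0) (K : 𝓢(E, F)) (x : E) :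
    l1Dilation ht K x = t ^ finrank ℝ E • K (t • x) :=
  rfl

theorem iteratedFDeriv_l1Dilation {t : ℝ} (ht : t ≠ 0) (K : 𝓢(E, F)) (i : ℕ) (x : E) :
    iteratedFDeriv ℝ i (l1Dilation ht K) x
      = t ^ finrank ℝ E • t ^ i • iteratedFDeriv ℝ i K (t • x) := by
  have hK : ContDiff ℝ i K := K.smooth i
  have h_coe : ⇑(l1Dilation ht K) = t ^ finrank ℝ E • (K ∘ (t • ·)) := rfl
  rw [h_coe, iteratedFDeriv_const_smul_apply (hK.comp (contDiff_const_smul t)).contDiffAt,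
    Function.comp_def, iteratedFDeriv_comp_const_smul t hK]

theorem weightedL1Norm_l1Dilation_le [FiniteDimensional ℝ E] [MeasureSpace E] [BorelSpace E]
    [(volume : Measure E).IsAddHaarMeasure] {t : ℝ} (ht : 1 ≤ t) (K : 𝓢(E, F)) (k i : ℕ) :
    weightedL1Norm k i (l1Dilation (zero_lt_one.trans_le ht).ne' K)
      ≤ t ^ i * weightedL1Norm k i K := by
  have ht_pos : 0 < t := zero_lt_one.trans_le ht
  let φ (w : E) : ℝ := (1 + ‖w‖) ^ k * ‖iteratedFDeriv ℝ i K w‖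
  have hφ : Integrable (fun w => φ (t • w)) :=
    (integrable_one_add_norm_pow_mul_iteratedFDeriv K k i).comp_smul ht_pos.ne'
  have h_norm_le (w : E) : ‖w‖ ≤ ‖t • w‖ := by
    rw [norm_smul, Real.norm_of_nonneg ht_pos.le]
    exact le_mul_of_one_le_left (norm_nonneg w) ht
  calc weightedL1Norm k i (l1Dilation ht_pos.ne' K)
      ≤ ∫ w, t ^ i * t ^ finrank ℝ E * φ (t • w) := by
        refine integral_mono_of_nonneg (.of_forall fun w => by positivity) (hφ.const_mul _)
          (.of_forall fun w => ?_)
        calc (1 + ‖w‖) ^ k * ‖iteratedFDeriv ℝ i (l1Dilation ht_pos.ne' K) w‖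
            = t ^ i * t ^ finrank ℝ E * ((1 + ‖w‖) ^ k * ‖iteratedFDeriv ℝ i K (t • w)‖) := by
              rw [iteratedFDeriv_l1Dilation, norm_smul, norm_smul,
                Real.norm_of_nonneg (by positivity), Real.norm_of_nonneg (by positivity)]
              ring
          _ ≤ t ^ i * t ^ finrank ℝ E * φ (t • w) := by
              unfold φ
              gcongr
              exact h_norm_le w
    _ = t ^ i * weightedL1Norm k i K := by
        rw [integral_const_mul, Measure.integral_comp_smul_of_nonneg volume φ t (hR := ht_pos.le),
          smul_eq_mul, weightedL1Norm]
        unfold φ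
        field_simp

theorem sup_schwartzSeminormFamily_le {f : 𝓢(E, F)} {k n : ℕ} {M : ℝ}
    (hf : ∀ j ≤ n, ∀ x, (1 + ‖x‖) ^ k * ‖iteratedFDeriv ℝ j f x‖ ≤ M) :
    (Finset.Iic (k, n)).sup (schwartzSeminormFamily ℝ E F) f ≤ M := by
  have hM : 0 ≤ M := le_trans (by positivity) (hf 0 n.zero_le 0)
  refine Seminorm.finset_sup_apply_le hM fun ⟨q, j⟩ hqj => ?_
  obtain ⟨hq, hj⟩ := Prod.mk_le_mk.1 (Finset.mem_Iic.1 hqj)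
  refine SchwartzMap.seminorm_le_bound ℝ q j f hM fun x => le_trans ?_ (hf j hj x)
  gcongr ?_ * _
  calc ‖x‖ ^ q ≤ (1 + ‖x‖) ^ q := by gcongr; linarith
    _ ≤ (1 + ‖x‖) ^ k := pow_le_pow_right₀ (by linarith [norm_nonneg x]) hq

end DerivativeNorms

section SchwartzConvolution

variable {E F₁ F₂ F₃ : Type*}
  [NormedAddCommGroup E] [InnerProductSpace ℝ E] [FiniteDimensional ℝ E]
  [MeasurableSpace E] [BorelSpace E]
  [NormedAddCommGroup F₁] [NormedSpace ℂ F₁] [NormedAddCommGroup F₂] [NormedSpace ℂ F₂]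
  [NormedAddCommGroup F₃] [NormedSpace ℂ F₃] [CompleteSpace F₃]

theorem lineDerivOp_convolution_left (B : F₁ →L[ℂ] F₂ →L[ℂ] F₃) (v : E)
    (f : 𝓢(E, F₁)) (g : 𝓢(E, F₂)) :
    ∂_{v} (SchwartzMap.convolution B f g) = SchwartzMap.convolution B (∂_{v} f) g := by
  have hv : (inner ℝ · v).HasTemperateGrowth := by fun_prop
  -- On the Fourier side `∂_v` is multiplication by a scalar function, which passes through `B`.
  have h_fourier : 𝓕 (∂_{v} (SchwartzMap.convolution B f g))
      = 𝓕 (SchwartzMap.convolution B (∂_{v} f) g) := by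
    ext x
    simp [SchwartzMap.fourier_lineDerivOp_eq, SchwartzMap.fourier_convolution, hv]
  simpa only [fourierInv_fourier_eq] using congrArg (𝓕⁻ ·) h_fourier

theorem lineDerivOp_convolution_right (B : F₁ →L[ℂ] F₂ →L[ℂ] F₃) (v : E)
    (f : 𝓢(E, F₁)) (g : 𝓢(E, F₂)) :
    ∂_{v} (SchwartzMap.convolution B f g) = SchwartzMap.convolution B f (∂_{v} g) :=
  lineDerivOp_convolution_left B.flip v g f

theorem iteratedLineDerivOp_convolution_left (B : F₁ →L[ℂ] F₂ →L[ℂ] F₃) {i : ℕ} (v : Fin i → E)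
    (f : 𝓢(E, F₁)) (g : 𝓢(E, F₂)) :
    ∂^{v} (SchwartzMap.convolution B f g) = SchwartzMap.convolution B (∂^{v} f) g := by
  induction i with
  | zero => rfl
  | succ i ih =>
    rw [iteratedLineDerivOp_succ_left, ih, lineDerivOp_convolution_left,
      ← iteratedLineDerivOp_succ_left]

theorem iteratedLineDerivOp_convolution (B : F₁ →L[ℂ] F₂ →L[ℂ] F₃) {i p : ℕ}
    (v : Fin (i + p) → E) (f : 𝓢(E, F₁)) (g : 𝓢(E, F₂)) :
    ∂^{v} (SchwartzMap.convolution B f g)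
      = SchwartzMap.convolution B (∂^{v ∘ Fin.castAdd p} f) (∂^{v ∘ Fin.natAdd i} g) := by
  induction p generalizing g with
  | zero => exact iteratedLineDerivOp_convolution_left B v f g
  | succ p ih =>
    calc ∂^{v} (SchwartzMap.convolution B f g)
        = ∂^{Fin.init (n := i + p) v} (∂_{v (Fin.last (i + p))} (SchwartzMap.convolution B f g)) :=
          iteratedLineDerivOp_succ_right (n := i + p) v _
      _ = SchwartzMap.convolution B (∂^{Fin.init (n := i + p) v ∘ Fin.castAdd p} f)
            (∂^{Fin.init (n := i + p) v ∘ Fin.natAdd i} (∂_{v (Fin.last (i + p))} g)) := by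
          rw [lineDerivOp_convolution_right, ih]
      _ = SchwartzMap.convolution B (∂^{v ∘ Fin.castAdd (p + 1)} f) (∂^{v ∘ Fin.natAdd i} g) := by
          rw [iteratedLineDerivOp_succ_right (v ∘ Fin.natAdd i)]
          rfl

variable [CompleteSpace F₁] [CompleteSpace F₂]

theorem one_add_norm_pow_mul_norm_iteratedFDeriv_convolution_le
    (B : F₁ →L[ℂ] F₂ →L[ℂ] F₃) (f : 𝓢(E, F₁)) (g : 𝓢(E, F₂)) {A : ℝ} {k i p : ℕ}
    (hg : ∀ y, (1 + ‖y‖) ^ k * ‖iteratedFDeriv ℝ p g y‖ ≤ A) (x : E) :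
    (1 + ‖x‖) ^ k * ‖iteratedFDeriv ℝ (i + p) (SchwartzMap.convolution B f g) x‖
      ≤ ‖B‖ * A * weightedL1Norm k i f := by
  have hA : 0 ≤ A := le_trans (by positivity) (hg 0)
  have h_weight : 0 < (1 + ‖x‖) ^ k := by positivity
  have hf_nonneg := weightedL1Norm_nonneg k i f
  rw [← le_div_iff₀' h_weight]
  refine ContinuousMultilinearMap.opNorm_le_bound (by positivity) fun v => ?_
  rw [div_mul_eq_mul_div, le_div_iff₀' h_weight,
    ← SchwartzMap.iteratedLineDerivOp_eq_iteratedFDeriv, iteratedLineDerivOp_convolution,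
    SchwartzMap.convolution_apply]
  set a := v ∘ Fin.castAdd p
  set b := v ∘ Fin.natAdd i
  calc (1 + ‖x‖) ^ k * ‖(⇑(∂^{a} f) ⋆[B] ⇑(∂^{b} g)) x‖
      ≤ ‖B‖ * (A * ∏ j, ‖b j‖)
          * ∫ w, (1 + ‖w‖) ^ k * ‖iteratedFDeriv ℝ i f w‖ * ∏ j, ‖a j‖ := by
        refine one_add_norm_pow_mul_norm_convolution_le B
          ((integrable_one_add_norm_pow_mul_iteratedFDeriv f k i).mul_const _)
          (one_add_norm_pow_mul_norm_iteratedLineDerivOp_le f k a) (fun y => ?_) x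
        refine (one_add_norm_pow_mul_norm_iteratedLineDerivOp_le g k b y).trans ?_
        gcongr
        exact hg y
    _ = ‖B‖ * A * weightedL1Norm k i f * ((∏ j, ‖a j‖) * ∏ j, ‖b j‖) := by
        rw [integral_mul_const, weightedL1Norm]
        ring
    _ = ‖B‖ * A * weightedL1Norm k i f * ∏ j, ‖v j‖ := by
        rw [Fin.prod_univ_add]
        rfl

theorem smoothing_convolution_estimate_general
    (B : F₁ →L[ℂ] F₂ →L[ℂ] F₃) (K : 𝓢(E, F₁)) (n k l : ℕ) :
    ∃ C > (0 : ℝ), ∀ (f : 𝓢(E, F₂)) (t : ℝ) (ht : 1 ≤ t),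
      (Finset.Iic (k, n + l)).sup (schwartzSeminormFamily ℝ E F₃)
          (SchwartzMap.convolution B (l1Dilation (zero_lt_one.trans_le ht).ne' K) f)
        ≤ C * t ^ l * (Finset.Iic (k, n)).sup (schwartzSeminormFamily ℝ E F₂) f := by
  set S := ∑ i ∈ Finset.range (l + 1), weightedL1Norm k i K
  have hS : 0 ≤ S := Finset.sum_nonneg fun i _ => weightedL1Norm_nonneg k i K
  refine ⟨‖B‖ * 2 ^ k * S + 1, by positivity, fun f t ht => ?_⟩
  set N := (Finset.Iic (k, n)).sup (schwartzSeminormFamily ℝ E F₂) f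
  set Kt := l1Dilation (zero_lt_one.trans_le ht).ne' K
  refine sup_schwartzSeminormFamily_le fun j hj x => ?_
  obtain ⟨i, p, hi, hp, rfl⟩ : ∃ i p, i ≤ l ∧ p ≤ n ∧ j = i + p :=
    ⟨j - min j n, min j n, by omega, by omega, by omega⟩
  have hi_le_S : weightedL1Norm k i K ≤ S :=
    Finset.single_le_sum (f := fun i => weightedL1Norm k i K)
      (fun i _ => weightedL1Norm_nonneg k i K) (Finset.mem_range.2 (by omega))
  calc (1 + ‖x‖) ^ k * ‖iteratedFDeriv ℝ (i + p) (SchwartzMap.convolution B Kt f) x‖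
      ≤ ‖B‖ * (2 ^ k * N) * weightedL1Norm k i Kt :=
        one_add_norm_pow_mul_norm_iteratedFDeriv_convolution_le B Kt f
          (SchwartzMap.one_add_le_sup_seminorm_apply (m := (k, n)) le_rfl hp f) x
    _ ≤ ‖B‖ * (2 ^ k * N) * (t ^ l * S) := by
        gcongr ‖B‖ * (2 ^ k * N) * ?_
        calc weightedL1Norm k i Kt ≤ t ^ i * weightedL1Norm k i K :=
              weightedL1Norm_l1Dilation_le ht K k i
          _ ≤ t ^ l * S := by
              gcongr
              exact weightedL1Norm_nonneg k i K
    _ = ‖B‖ * 2 ^ k * S * t ^ l * N := by ring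
    _ ≤ (‖B‖ * 2 ^ k * S + 1) * t ^ l * N := by gcongr; linarith

end SchwartzConvolution

theorem schwartzNorm_eq_sup_schwartzSeminormFamily {m : ℕ} (n k : ℕ)
    (f : 𝓢(EuclideanSpace ℝ (Fin m), ℂ)) :
    schwartzNorm m n k f = (Finset.Iic (k, n)).sup (schwartzSeminormFamily ℝ _ ℂ) f := by
  have h_le (p : EuclideanSpace ℝ (Fin m) × Fin (n + 1) × Fin (k + 1)) :
      ‖p.1‖ ^ (p.2.2 : ℕ) * ‖iteratedFDeriv ℝ p.2.1 f p.1‖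
        ≤ (Finset.Iic (k, n)).sup (schwartzSeminormFamily ℝ _ ℂ) f :=
    (SchwartzMap.le_seminorm ℝ _ _ f p.1).trans <|
      Seminorm.le_finset_sup_apply (p := schwartzSeminormFamily ℝ _ ℂ) (i := (p.2.2.val, p.2.1.val))
        (Finset.mem_Iic.2 ⟨by dsimp only; omega, by dsimp only; omega⟩)
  refine le_antisymm (ciSup_le h_le) ?_
  have h_nonneg : 0 ≤ schwartzNorm m n k f := Real.iSup_nonneg fun _ => by positivity
  refine Seminorm.finset_sup_apply_le h_nonneg fun ⟨q, j⟩ hqj => ?_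
  obtain ⟨hq, hj⟩ := Prod.mk_le_mk.1 (Finset.mem_Iic.1 hqj)
  exact SchwartzMap.seminorm_le_bound ℝ q j f h_nonneg fun x =>
    le_ciSup ⟨_, Set.forall_mem_range.2 h_le⟩ (x, ⟨j, by omega⟩, ⟨q, by omega⟩)

theorem conv_eq_convolution_l1Dilation {m : ℕ} {t : ℝ} (ht : t ≠ 0)
    (K f : 𝓢(EuclideanSpace ℝ (Fin m), ℂ)) :
    conv m (fun x => (t : ℂ) ^ m * K (t • x)) f
      = SchwartzMap.convolution (ContinuousLinearMap.mul ℂ ℂ) (l1Dilation ht K) f := by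
  ext x
  rw [SchwartzMap.convolution_apply, convolution_eq_swap]
  simp [conv, l1Dilation_apply]

/-- for a Schwartz function `K`, with `K_t(x) := t^m K(t x)`, for all
`n, k, l` there is `C = C(K,n,k,l) > 0` such that for every Schwartz `f` and `t ≥ 1`,
`‖K_t * f‖_{n+l,k} ≤ C t^l ‖f‖_{n,k}`. -/
theorem smoothing_convolution_estimate (m : ℕ) (hm : 1 ≤ m)
    (K : 𝓢(EuclideanSpace ℝ (Fin m), ℂ)) (n k l : ℕ) :
    ∃ C > (0 : ℝ), ∀ (f : 𝓢(EuclideanSpace ℝ (Fin m), ℂ)) (t : ℝ), 1 ≤ t →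
      schwartzNorm m (n + l) k
          (conv m (fun x => (t : ℂ) ^ m * K (t • x)) (⇑f))
        ≤ C * t ^ l * schwartzNorm m n k (⇑f) := by
  obtain ⟨C, hC, h⟩ :=
    smoothing_convolution_estimate_general (ContinuousLinearMap.mul ℂ ℂ) K n k l
  refine ⟨C, hC, fun f t ht => ?_⟩
  simpa only [conv_eq_convolution_l1Dilation (zero_lt_one.trans_le ht).ne',
    schwartzNorm_eq_sup_schwartzSeminormFamily] using h f t ht
end
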